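/- arXiv:1608.02650 — 3 statements merged into one kernel-verified Lean document; each statement's English description precedes it below -/
import Mathlib

section
/- For any finite orthonormal family {|ψ_i⟩} of vectors in a finite-dimensional Hilbert space H_S, there exists a quantum channel Λ from operators on H_S to operators on H_{S1} ⊗ H_{S2} (with H_{S1} ≅ H_{S2} ≅ H_S) such that, for every probability distribution {p_i}, Λ[Σ_i p_i |ψ_i⟩⟨ψ_i|] = Σ_i p_i |ψ_i⟩⟨ψ_i| ⊗ |ψ_i⟩⟨ψ_i|. In particular, any state ρ_S = Σ_i p_i |ψ_i⟩⟨ψ_i| diagonal in a fixed orthonormal basis can be broadcast: the two marginals of Λ[ρ_S] both equal ρ_S. -/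
open Matrix Kronecker ComplexOrder

section Defs
variable {α α' β β' γ : Type*} [Fintype α] [DecidableEq α] [Fintype α'] [DecidableEq α']
  [Fintype β] [DecidableEq β] [Fintype β'] [DecidableEq β'] [Fintype γ] [DecidableEq γ]

/-- A density matrix: a positive semidefinite matrix with unit trace. -/
def IsDensityMatrix (ρ : Matrix β β ℂ) : Prop := ρ.PosSemidef ∧ ρ.trace = 1

/-- The map `id_α ⊗ Λ` induced on matrices over the product index type. -/
noncomputable def idTensor (Λ : Matrix β β ℂ →ₗ[ℂ] Matrix β' β' ℂ) :
    Matrix (α × β) (α × β) ℂ →ₗ[ℂ] Matrix (α × β') (α × β') ℂ where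
  toFun M := Matrix.of fun p q => Λ (Matrix.of fun b b' => M (p.1, b) (q.1, b')) p.2 q.2
  map_add' M N := by
    ext p q
    show Λ (Matrix.of fun b b' => (M + N) (p.1, b) (q.1, b')) p.2 q.2 = _
    have h : (Matrix.of fun b b' => (M + N) (p.1, b) (q.1, b')) =
        (Matrix.of fun b b' => M (p.1, b) (q.1, b')) +
          (Matrix.of fun b b' => N (p.1, b) (q.1, b')) := rfl
    rw [h, map_add]
    rfl
  map_smul' c M := by
    ext p q
    show Λ (Matrix.of fun b b' => (c • M) (p.1, b) (q.1, b')) p.2 q.2 = _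
    have h : (Matrix.of fun b b' => (c • M) (p.1, b) (q.1, b')) =
        c • (Matrix.of fun b b' => M (p.1, b) (q.1, b')) := rfl
    rw [h, _root_.map_smul]
    rfl

/-- Complete positivity: all extensions `id ⊗ Λ` preserve positive semidefiniteness. -/
def IsCompletelyPositive (Λ : Matrix β β ℂ →ₗ[ℂ] Matrix β' β' ℂ) : Prop :=
  ∀ (k : ℕ) (M : Matrix (Fin k × β) (Fin k × β) ℂ), M.PosSemidef → (idTensor Λ M).PosSemidef

/-- A quantum channel: a completely positive trace-preserving linear map. -/
def IsQuantumChannel (Λ : Matrix β β ℂ →ₗ[ℂ] Matrix β' β' ℂ) : Prop :=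
  IsCompletelyPositive Λ ∧ ∀ X, (Λ X).trace = X.trace

/-- Partial trace over the second tensor factor. -/
noncomputable def ptraceRight (M : Matrix (α × β) (α × β) ℂ) : Matrix α α ℂ :=
  Matrix.of fun a a' => ∑ b, M (a, b) (a', b)

/-- Partial trace over the first tensor factor. -/
noncomputable def ptraceLeft (M : Matrix (α × β) (α × β) ℂ) : Matrix β β ℂ :=
  Matrix.of fun b b' => ∑ a, M (a, b) (a, b')

end Defs

/-! Complete `ψ` to an orthonormal basis `b`. The vectors `bⱼ ⊗ bⱼ` are again orthonormal, so
`V = ∑ⱼ |bⱼ ⊗ bⱼ⟩⟨bⱼ|` is an isometry. Hence `X ↦ V X V†` is a channel, and it sends `|ψᵢ⟩⟨ψᵢ|` to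
`|ψᵢ⟩⟨ψᵢ| ⊗ |ψᵢ⟩⟨ψᵢ|`: an orthonormal family can be cloned, and by linearity each mixture of it
can be broadcast. -/

section Conjugation

variable {α β β' : Type*} [Fintype β]

/-- The map `X ↦ V X V†` with the single Kraus operator `V`, a quantum channel when `V` is an
isometry. -/
noncomputable def conjugationMap (V : Matrix β' β ℂ) : Matrix β β ℂ →ₗ[ℂ] Matrix β' β' ℂ :=
  mulRightLinearMap β' ℂ Vᴴ ∘ₗ mulLeftLinearMap β ℂ V

@[simp]
lemma conjugationMap_apply (V : Matrix β' β ℂ) (X : Matrix β β ℂ) :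
    conjugationMap V X = V * X * Vᴴ := rfl

lemma conjugationMap_vecMulVec_star (V : Matrix β' β ℂ) (u : β → ℂ) :
    conjugationMap V (vecMulVec u (star u)) = vecMulVec (V *ᵥ u) (star (V *ᵥ u)) := by
  rw [conjugationMap_apply, mul_vecMulVec, vecMulVec_mul, star_mulVec]

lemma idTensor_conjugationMap [Fintype α] [DecidableEq α] (V : Matrix β' β ℂ)
    (M : Matrix (α × β) (α × β) ℂ) :
    idTensor (conjugationMap V) M =
      ((1 : Matrix α α ℂ) ⊗ₖ V) * M * ((1 : Matrix α α ℂ) ⊗ₖ V)ᴴ := by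
  ext p q
  simp [idTensor, mul_apply, Fintype.sum_prod_type, one_apply, apply_ite star]

lemma isCompletelyPositive_conjugationMap [Finite β'] (V : Matrix β' β ℂ) :
    IsCompletelyPositive (conjugationMap V) := by
  intro k M hM
  rw [idTensor_conjugationMap]
  exact hM.mul_mul_conjTranspose_same _

lemma isQuantumChannel_conjugationMap [DecidableEq β] [Fintype β'] {V : Matrix β' β ℂ}
    (hV : Vᴴ * V = 1) :
    IsQuantumChannel (conjugationMap V) := by
  refine ⟨isCompletelyPositive_conjugationMap V, fun X => ?_⟩
  rw [conjugationMap_apply, trace_mul_comm, ← Matrix.mul_assoc, hV, Matrix.one_mul]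

end Conjugation

section KroneckerVec

variable {R m n : Type*} [CommSemiring R]

/-- The tensor product `u ⊗ v` of two coordinate vectors, indexed by pairs as in
`Matrix.kronecker`. -/
def kroneckerVec (u : m → R) (v : n → R) : m × n → R := fun p => u p.1 * v p.2

variable [StarRing R]

lemma vecMulVec_kroneckerVec_star (u : m → R) (v : n → R) :
    vecMulVec (kroneckerVec u v) (star (kroneckerVec u v)) =
      vecMulVec u (star u) ⊗ₖ vecMulVec v (star v) := by
  ext p q
  simp only [vecMulVec_apply, kroneckerVec, kroneckerMap_apply, Pi.star_apply, star_mul']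
  exact mul_mul_mul_comm _ _ _ _

lemma star_kroneckerVec_dotProduct [Fintype m] [Fintype n] (u u' : m → R) (v v' : n → R) :
    star (kroneckerVec u v) ⬝ᵥ kroneckerVec u' v' = (star u ⬝ᵥ u') * (star v ⬝ᵥ v') := by
  simp only [dotProduct, kroneckerVec, Pi.star_apply, star_mul', Fintype.sum_prod_type,
    Finset.sum_mul_sum, mul_mul_mul_comm]

end KroneckerVec

section CloningIsometry

variable {𝕜 ι n : Type*} [RCLike 𝕜] [Fintype n]

lemma orthonormal_toLp_iff_star_dotProduct [DecidableEq ι] {v : ι → n → 𝕜} :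
    Orthonormal 𝕜 (fun i => WithLp.toLp 2 (v i)) ↔
      ∀ i j, star (v i) ⬝ᵥ v j = if i = j then 1 else 0 := by
  simp only [orthonormal_iff_ite, EuclideanSpace.inner_toLp_toLp, dotProduct_comm]

variable [Fintype ι] (b : OrthonormalBasis ι 𝕜 (EuclideanSpace 𝕜 n))

lemma star_orthonormalBasis_dotProduct [DecidableEq ι] (i j : ι) :
    star (b i).ofLp ⬝ᵥ (b j).ofLp = if i = j then 1 else 0 :=
  orthonormal_toLp_iff_star_dotProduct.mp b.orthonormal i j

lemma sum_vecMulVec_orthonormalBasis_star [DecidableEq n] :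
    ∑ j, vecMulVec (b j).ofLp (star (b j).ofLp) = 1 := by
  simp_rw [← InnerProductSpace.symm_toEuclideanLin_rankOne, ← map_sum]
  rw [← ContinuousLinearMap.toLinearMap_sum, b.sum_rankOne_eq_id]
  simp

/-- The operator `∑ⱼ |bⱼ ⊗ bⱼ⟩⟨bⱼ|`, which clones the vectors of the orthonormal basis `b`. -/
noncomputable def cloningIsometry : Matrix (n × n) n 𝕜 :=
  ∑ j, vecMulVec (kroneckerVec (b j).ofLp (b j).ofLp) (star (b j).ofLp)

lemma cloningIsometry_mulVec (i : ι) :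
    cloningIsometry b *ᵥ (b i).ofLp = kroneckerVec (b i).ofLp (b i).ofLp := by
  classical
  simp [cloningIsometry, sum_mulVec, vecMulVec_mulVec, star_orthonormalBasis_dotProduct]

lemma conjTranspose_cloningIsometry_mul_self [DecidableEq n] :
    (cloningIsometry b)ᴴ * cloningIsometry b = 1 := by
  classical
  calc (cloningIsometry b)ᴴ * cloningIsometry b
      = ∑ j, ∑ i, (star (kroneckerVec (b i).ofLp (b i).ofLp) ⬝ᵥ
          kroneckerVec (b j).ofLp (b j).ofLp) • vecMulVec (b i).ofLp (star (b j).ofLp) := by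
        simp only [cloningIsometry, conjTranspose_sum, Matrix.mul_sum, Matrix.sum_mul,
          conjTranspose_vecMulVec, vecMulVec_mul_vecMulVec, vecMulVec_smul, star_star]
    _ = ∑ j, vecMulVec (b j).ofLp (star (b j).ofLp) := by
        simp [star_kroneckerVec_dotProduct, star_orthonormalBasis_dotProduct]
    _ = 1 := sum_vecMulVec_orthonormalBasis_star b

end CloningIsometry

lemma exists_isometry_cloning_orthonormal {𝕜 ι n : Type*} [RCLike 𝕜] [DecidableEq ι]
    [Fintype n] [DecidableEq n] {ψ : ι → n → 𝕜}
    (hψ : ∀ i j, star (ψ i) ⬝ᵥ ψ j = if i = j then 1 else 0) :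
    ∃ V : Matrix (n × n) n 𝕜, Vᴴ * V = 1 ∧ ∀ i, V *ᵥ ψ i = kroneckerVec (ψ i) (ψ i) := by
  obtain ⟨u, b, hu, hb⟩ :=
    (orthonormal_toLp_iff_star_dotProduct.mpr hψ).toSubtypeRange.exists_orthonormalBasis_extension
  refine ⟨cloningIsometry b, conjTranspose_cloningIsometry_mul_self b, fun i => ?_⟩
  simpa [hb] using cloningIsometry_mulVec b ⟨WithLp.toLp 2 (ψ i), hu ⟨i, rfl⟩⟩

lemma exists_isQuantumChannel_cloning_orthonormal {ι n : Type*} [DecidableEq ι] [Fintype n]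
    {ψ : ι → n → ℂ} (hψ : ∀ i j, star (ψ i) ⬝ᵥ ψ j = if i = j then 1 else 0) :
    ∃ Λ : Matrix n n ℂ →ₗ[ℂ] Matrix (n × n) (n × n) ℂ, IsQuantumChannel Λ ∧
      ∀ i, Λ (vecMulVec (ψ i) (star (ψ i))) =
        vecMulVec (ψ i) (star (ψ i)) ⊗ₖ vecMulVec (ψ i) (star (ψ i)) := by
  classical
  obtain ⟨V, hV, hVψ⟩ := exists_isometry_cloning_orthonormal hψ
  refine ⟨conjugationMap V, isQuantumChannel_conjugationMap hV, fun i => ?_⟩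
  rw [conjugationMap_vecMulVec_star, hVψ, vecMulVec_kroneckerVec_star]

section PartialTrace

variable {ι α β : Type*}

lemma ptraceRight_sum_smul_kronecker [Fintype β] (s : Finset ι) (c : ι → ℂ) (A : ι → Matrix α α ℂ)
    (B : ι → Matrix β β ℂ) :
    ptraceRight (∑ i ∈ s, c i • (A i ⊗ₖ B i)) = ∑ i ∈ s, (c i * (B i).trace) • A i := by
  ext a a'
  simp only [ptraceRight, of_apply, Matrix.sum_apply, Matrix.smul_apply, kroneckerMap_apply,
    smul_eq_mul]
  rw [Finset.sum_comm]
  simp only [trace, diag, ← Finset.mul_sum, ← Finset.sum_mul, mul_assoc,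
    mul_comm (A _ a a')]

lemma ptraceLeft_sum_smul_kronecker [Fintype α] (s : Finset ι) (c : ι → ℂ) (A : ι → Matrix α α ℂ)
    (B : ι → Matrix β β ℂ) :
    ptraceLeft (∑ i ∈ s, c i • (A i ⊗ₖ B i)) = ∑ i ∈ s, (c i * (A i).trace) • B i := by
  ext b b'
  simp only [ptraceLeft, of_apply, Matrix.sum_apply, Matrix.smul_apply, kroneckerMap_apply,
    smul_eq_mul]
  rw [Finset.sum_comm]
  simp only [trace, diag, ← Finset.mul_sum, ← Finset.sum_mul, mul_assoc]

end PartialTrace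

theorem broadcast_of_diagonal_states_general {ι n : Type*} [Fintype ι] [DecidableEq ι]
    [Fintype n] (ψ : ι → n → ℂ)
    (hψ : ∀ i j, star (ψ i) ⬝ᵥ ψ j = if i = j then 1 else 0) :
    ∃ Λ : Matrix n n ℂ →ₗ[ℂ] Matrix (n × n) (n × n) ℂ, IsQuantumChannel Λ ∧
      ∀ c : ι → ℂ,
        Λ (∑ i, c i • vecMulVec (ψ i) (star (ψ i))) =
            ∑ i, c i • (vecMulVec (ψ i) (star (ψ i)) ⊗ₖ vecMulVec (ψ i) (star (ψ i))) ∧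
          ptraceRight (Λ (∑ i, c i • vecMulVec (ψ i) (star (ψ i)))) =
            ∑ i, c i • vecMulVec (ψ i) (star (ψ i)) ∧
          ptraceLeft (Λ (∑ i, c i • vecMulVec (ψ i) (star (ψ i)))) =
            ∑ i, c i • vecMulVec (ψ i) (star (ψ i)) := by
  obtain ⟨Λ, hΛ, hclone⟩ := exists_isQuantumChannel_cloning_orthonormal hψ
  refine ⟨Λ, hΛ, fun c => ?_⟩
  have hmix : Λ (∑ i, c i • vecMulVec (ψ i) (star (ψ i))) =
      ∑ i, c i • (vecMulVec (ψ i) (star (ψ i)) ⊗ₖ vecMulVec (ψ i) (star (ψ i))) := by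
    simp only [map_sum, _root_.map_smul, hclone]
  have htrace (i : ι) : (vecMulVec (ψ i) (star (ψ i))).trace = 1 := by
    rw [trace_vecMulVec, dotProduct_comm, hψ, if_pos rfl]
  refine ⟨hmix, ?_, ?_⟩
  · simp only [hmix, ptraceRight_sum_smul_kronecker, htrace, mul_one]
  · simp only [hmix, ptraceLeft_sum_smul_kronecker, htrace, mul_one]

/-- For any finite orthonormal family `{|ψᵢ⟩}` there is a quantum channel `Λ` that
broadcasts every state diagonal in that family: for every probability distribution `{pᵢ}`,
`Λ[∑ᵢ pᵢ |ψᵢ⟩⟨ψᵢ|] = ∑ᵢ pᵢ |ψᵢ⟩⟨ψᵢ| ⊗ |ψᵢ⟩⟨ψᵢ|`, and in particular both marginals of the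
output equal the input state. -/
theorem broadcast_of_diagonal_states {n : Type*} [Fintype n] [DecidableEq n] {k : ℕ}
    (ψ : Fin k → (n → ℂ))
    (hortho : ∀ i j, star (ψ i) ⬝ᵥ ψ j = if i = j then 1 else 0) :
    ∃ Λ : Matrix n n ℂ →ₗ[ℂ] Matrix (n × n) (n × n) ℂ, IsQuantumChannel Λ ∧
      ∀ p : Fin k → ℝ, (∀ i, 0 ≤ p i) → ∑ i, p i = 1 →
        (Λ (∑ i, (p i : ℂ) • vecMulVec (ψ i) (star (ψ i))) =
            ∑ i, (p i : ℂ) •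
              (vecMulVec (ψ i) (star (ψ i)) ⊗ₖ vecMulVec (ψ i) (star (ψ i))) ∧
          ptraceRight (Λ (∑ i, (p i : ℂ) • vecMulVec (ψ i) (star (ψ i)))) =
            ∑ i, (p i : ℂ) • vecMulVec (ψ i) (star (ψ i)) ∧
          ptraceLeft (Λ (∑ i, (p i : ℂ) • vecMulVec (ψ i) (star (ψ i)))) =
            ∑ i, (p i : ℂ) • vecMulVec (ψ i) (star (ψ i))) := by
  obtain ⟨Λ, hΛ, h⟩ := broadcast_of_diagonal_states_general ψ hortho
  exact ⟨Λ, hΛ, fun p _ _ => h fun i => p i⟩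
end

section
/- (No-unilocal-broadcasting theorem) Let ρ_{AB} be a density matrix on H_A ⊗ H_B (finite-dimensional). There exists a quantum channel Γ: B → B₁B₂ (with H_{B1} ≅ H_{B2} ≅ H_B) such that ρ̃_{AB1B2} = (id_A ⊗ Γ)[ρ_{AB}] satisfies Tr_{B2}(ρ̃) = ρ_{AB} and Tr_{B1}(ρ̃) = ρ_{AB} if and only if ρ_{AB} is classical on B, i.e., ρ_{AB} = Σ_j p_j ρ_j^A ⊗ |b_j⟩⟨b_j| for some probability distribution {p_j}, density matrices ρ_j^A on H_A, and an orthonormal basis {|b_j⟩} of H_B. -/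
open Matrix Kronecker ComplexOrder

section Defs
variable {α α' β β' γ : Type*} [Fintype α] [DecidableEq α] [Fintype α'] [DecidableEq α']
  [Fintype β] [DecidableEq β] [Fintype β'] [DecidableEq β'] [Fintype γ] [DecidableEq γ]

/-- Partial trace over the third tensor factor of a tripartite system. -/
noncomputable def ptraceThird (M : Matrix (α × β × γ) (α × β × γ) ℂ) :
    Matrix (α × β) (α × β) ℂ :=
  Matrix.of fun p q => ∑ c, M (p.1, p.2, c) (q.1, q.2, c)

/-- Partial trace over the second tensor factor of a tripartite system. -/
noncomputable def ptraceSecond (M : Matrix (α × β × γ) (α × β × γ) ℂ) :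
    Matrix (α × γ) (α × γ) ℂ :=
  Matrix.of fun p q => ∑ b, M (p.1, b, p.2) (q.1, b, q.2)

/-- A bipartite state is classical on `B` if it has the form
`∑ⱼ pⱼ ρⱼ^A ⊗ |bⱼ⟩⟨bⱼ|` for an orthonormal basis `{|bⱼ⟩}` of `H_B`. -/
def ClassicalOnB (ρ : Matrix (α × β) (α × β) ℂ) : Prop :=
  ∃ (p : β → ℝ) (τ : β → Matrix α α ℂ) (bv : β → β → ℂ),
    (∀ j, 0 ≤ p j) ∧ (∑ j, p j = 1) ∧ (∀ j, IsDensityMatrix (τ j)) ∧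
    (∀ j j', star (bv j) ⬝ᵥ bv j' = if j = j' then 1 else 0) ∧
    ρ = ∑ j, (p j : ℂ) • (τ j ⊗ₖ vecMulVec (bv j) (star (bv j)))

end Defs

/-!
Write a broadcasting channel in Kraus form `X ↦ ∑ₛ Kₛ X Kₛᴴ`. The blocks `⟨a| ρ |a'⟩` and the
marginal `σ = Tr_A ρ` are fixed by both output marginals. After restriction to the support of `σ`
this state is faithful, and for each fixed `R` the observable `x = R σ⁻¹` attains equality in the
Kadison–Schwarz inequality, which forces `(x ⊗ 1) Kₛ = Kₛ x` for all `s`; the other marginal gives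
`(1 ⊗ y) Kₛ = Kₛ y`. As `x ⊗ 1` and `1 ⊗ y` commute, so do `x` and `y`. Hence the `R σ⁻¹` commute
with each other and with each other's adjoints and, being normal, with `σ`, so all blocks of `ρ`
commute. A common eigenbasis of the blocks is the classical basis. Conversely, a classical state is
broadcast by measuring its basis and preparing two copies of the outcome.
-/

section KrausMaps

variable {𝕜 ι m n : Type*} [RCLike 𝕜] [Fintype ι]

/-- The completely positive map `X ↦ ∑ₛ Kₛ X Kₛᴴ` with Kraus operators `K`. -/
def krausMap [Fintype n] (K : ι → Matrix m n 𝕜) : Matrix n n 𝕜 →ₗ[𝕜] Matrix m m 𝕜 where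
  toFun X := ∑ s, K s * X * (K s)ᴴ
  map_add' X Y := by simp only [Matrix.mul_add, Matrix.add_mul, Finset.sum_add_distrib]
  map_smul' c X := by
    simp only [Matrix.mul_smul, Matrix.smul_mul, Finset.smul_sum, RingHom.id_apply]

theorem krausMap_apply [Fintype n] (K : ι → Matrix m n 𝕜) (X : Matrix n n 𝕜) :
    krausMap K X = ∑ s, K s * X * (K s)ᴴ := rfl

/-- The Heisenberg dual `Y ↦ ∑ₛ Kₛᴴ Y Kₛ` of `krausMap K`, its adjoint for the trace pairing. -/
def krausDual [Fintype m] (K : ι → Matrix m n 𝕜) (Y : Matrix m m 𝕜) : Matrix n n 𝕜 :=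
  ∑ s, (K s)ᴴ * Y * K s

theorem trace_krausMap_mul [Fintype m] [Fintype n] (K : ι → Matrix m n 𝕜) (X : Matrix n n 𝕜)
    (Y : Matrix m m 𝕜) :
    (krausMap K X * Y).trace = (X * krausDual K Y).trace := by
  simp only [krausMap_apply, krausDual, Matrix.sum_mul, Matrix.mul_sum, trace_sum]
  refine Finset.sum_congr rfl fun s _ => ?_
  rw [Matrix.mul_assoc, Matrix.mul_assoc, trace_mul_comm]
  simp only [Matrix.mul_assoc]

theorem conjTranspose_krausMap [Fintype n] (K : ι → Matrix m n 𝕜) (X : Matrix n n 𝕜) :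
    (krausMap K X)ᴴ = krausMap K Xᴴ := by
  simp only [krausMap_apply, conjTranspose_sum, conjTranspose_mul, conjTranspose_conjTranspose,
    Matrix.mul_assoc]

theorem conjTranspose_krausDual [Fintype m] (K : ι → Matrix m n 𝕜) (Y : Matrix m m 𝕜) :
    (krausDual K Y)ᴴ = krausDual K Yᴴ := by
  simp only [krausDual, conjTranspose_sum, conjTranspose_mul, conjTranspose_conjTranspose,
    Matrix.mul_assoc]

theorem sum_conjTranspose_mul_self_of_trace_preserving [Fintype m] [Fintype n] [DecidableEq n]
    {K : ι → Matrix m n 𝕜} (hK : ∀ X, (krausMap K X).trace = X.trace) : ∑ s, (K s)ᴴ * K s = 1 := by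
  classical
  refine Matrix.ext_iff_trace_mul_left.mpr fun X => ?_
  rw [Matrix.mul_one, ← hK X, ← Matrix.mul_one (krausMap K X), trace_krausMap_mul]
  simp only [krausDual, Matrix.mul_one]

end KrausMaps

section FixedPoints

variable {𝕜 ι m n : Type*} [RCLike 𝕜] [Fintype ι] [Fintype m] [Fintype n]

/-- `R` is fixed by the marginal of `krausMap K` along the embedding `π` of observables, i.e.
`R` and `krausMap K R` assign the same expectation to `x` and to `π x`. For `π x = x ⊗ 1` the
marginal is the partial trace over the second factor. -/
def IsMarginalFixed (K : ι → Matrix m n 𝕜) (π : Matrix n n 𝕜 →⋆ₙₐ[𝕜] Matrix m m 𝕜)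
    (R : Matrix n n 𝕜) : Prop :=
  ∀ x, (krausMap K R * π x).trace = (R * x).trace

/-- Every Kraus operator intertwines the observable `x` with its image `π x`. -/
def Intertwines (K : ι → Matrix m n 𝕜) (π : Matrix n n 𝕜 →⋆ₙₐ[𝕜] Matrix m m 𝕜)
    (x : Matrix n n 𝕜) : Prop :=
  ∀ s, π x * K s = K s * x

variable {K : ι → Matrix m n 𝕜} {π π₁ π₂ : Matrix n n 𝕜 →⋆ₙₐ[𝕜] Matrix m m 𝕜}
  {R S σ x y : Matrix n n 𝕜}

theorem IsMarginalFixed.trace_mul_krausDual (hR : IsMarginalFixed K π R) (x : Matrix n n 𝕜) :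
    (R * krausDual K (π x)).trace = (R * x).trace := by
  rw [← trace_krausMap_mul, hR x]

theorem IsMarginalFixed.conjTranspose (hR : IsMarginalFixed K π R) : IsMarginalFixed K π Rᴴ := by
  intro x
  have h := congrArg star (hR xᴴ)
  rw [← trace_conjTranspose, ← trace_conjTranspose, conjTranspose_mul, conjTranspose_mul,
    conjTranspose_krausMap, ← star_eq_conjTranspose x, map_star, star_eq_conjTranspose,
    star_eq_conjTranspose, conjTranspose_conjTranspose, conjTranspose_conjTranspose] at h
  rw [trace_mul_comm, h, trace_mul_comm]

theorem eq_zero_of_trace_mul_mul_conjTranspose_eq_zero {A : Matrix m n 𝕜} (hσ : σ.PosDef)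
    (h : (A * σ * Aᴴ).trace = 0) : A = 0 := by
  have hA : A * σ * Aᴴ = 0 := (hσ.posSemidef.mul_mul_conjTranspose_same A).trace_eq_zero_iff.mp h
  ext i j
  by_contra hij
  have hrow : star (A i) ≠ 0 := fun h0 => hij (by simpa using congrFun h0 j)
  refine (hσ.dotProduct_mulVec_pos hrow).ne' ?_
  rw [star_star, dotProduct_mulVec]
  exact congrFun (congrFun hA i) i

theorem eq_conjTranspose_of_mul_eq (hσ : σ.PosDef) (hxy : x * σ = σ * yᴴ)
    (hcomm : Commute x y) (hnormal : Commute y yᴴ) : x = yᴴ := by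
  have hxy' : σ * xᴴ = y * σ := by
    simpa only [conjTranspose_mul, conjTranspose_conjTranspose, hσ.isHermitian.eq] using
      congrArg Matrix.conjTranspose hxy
  refine sub_eq_zero.mp (eq_zero_of_trace_mul_mul_conjTranspose_eq_zero hσ ?_)
  have hexpand : (x - yᴴ) * σ * (x - yᴴ)ᴴ =
      x * y * σ - x * σ * y - yᴴ * y * σ + yᴴ * σ * y := by
    simp only [conjTranspose_sub, conjTranspose_conjTranspose, Matrix.sub_mul, Matrix.mul_sub,
      Matrix.mul_assoc, hxy']
    abel
  have hx : (x * σ * y).trace = (x * y * σ).trace := by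
    rw [trace_mul_comm, ← Matrix.mul_assoc, hcomm.eq]
  have hy : (yᴴ * σ * y).trace = (yᴴ * y * σ).trace := by
    rw [trace_mul_comm, ← Matrix.mul_assoc, hnormal.eq]
  rw [hexpand, trace_add, trace_sub, trace_sub, hx, hy]
  ring

variable [DecidableEq n]

theorem sum_conjTranspose_mul_self_intertwining_defect (hK : ∑ s, (K s)ᴴ * K s = 1)
    (π : Matrix n n 𝕜 →⋆ₙₐ[𝕜] Matrix m m 𝕜) (x : Matrix n n 𝕜) :
    ∑ s, (π x * K s - K s * x)ᴴ * (π x * K s - K s * x) =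
      krausDual K (π (xᴴ * x)) - (krausDual K (π x))ᴴ * x - xᴴ * krausDual K (π x) + xᴴ * x := by
  have hx : xᴴ * x = ∑ s, xᴴ * ((K s)ᴴ * K s) * x := by
    rw [← Matrix.sum_mul, ← Matrix.mul_sum, hK, Matrix.mul_one]
  rw [conjTranspose_krausDual, map_mul, ← star_eq_conjTranspose x, map_star,
    star_eq_conjTranspose x, hx]
  simp only [krausDual, Matrix.sum_mul, Matrix.mul_sum, ← Finset.sum_sub_distrib,
    ← Finset.sum_add_distrib]
  refine Finset.sum_congr rfl fun s _ => ?_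
  simp only [conjTranspose_sub, conjTranspose_mul, star_eq_conjTranspose, Matrix.sub_mul,
    Matrix.mul_sub, Matrix.mul_assoc]
  abel

/-- The equality case of the Kadison–Schwarz inequality for the faithful state `σ`. -/
theorem intertwines_of_trace_eq (hK : ∑ s, (K s)ᴴ * K s = 1) (hσ : σ.PosDef)
    (hfix : IsMarginalFixed K π σ)
    (h : (σ * (xᴴ * krausDual K (π x))).trace = (σ * (xᴴ * x)).trace) : Intertwines K π x := by
  have hconj : (σ * ((krausDual K (π x))ᴴ * x)).trace = (σ * (xᴴ * x)).trace := by
    have h' := congrArg star h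
    simp only [← trace_conjTranspose, conjTranspose_mul, conjTranspose_conjTranspose,
      hσ.isHermitian.eq] at h'
    rwa [trace_mul_comm, trace_mul_comm σ]
  have hsum : ∑ s, ((π x * K s - K s * x) * σ * (π x * K s - K s * x)ᴴ).trace = 0 := by
    calc ∑ s, ((π x * K s - K s * x) * σ * (π x * K s - K s * x)ᴴ).trace
      _ = (σ * ∑ s, (π x * K s - K s * x)ᴴ * (π x * K s - K s * x)).trace := by
        rw [Matrix.mul_sum, trace_sum]
        exact Finset.sum_congr rfl fun s _ => by
          rw [Matrix.mul_assoc, trace_mul_comm, Matrix.mul_assoc]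
      _ = 0 := by
        rw [sum_conjTranspose_mul_self_intertwining_defect hK]
        simp only [Matrix.mul_add, Matrix.mul_sub, trace_add, trace_sub, h, hconj,
          hfix.trace_mul_krausDual]
        ring
  have hzero := (Finset.sum_eq_zero_iff_of_nonneg fun s _ =>
    (hσ.posSemidef.mul_mul_conjTranspose_same (π x * K s - K s * x)).trace_nonneg).mp hsum
  exact fun s => sub_eq_zero.mp
    (eq_zero_of_trace_mul_mul_conjTranspose_eq_zero hσ (hzero s (Finset.mem_univ s)))

theorem Intertwines.krausDual_eq (hK : ∑ s, (K s)ᴴ * K s = 1) (hx : Intertwines K π x) :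
    krausDual K (π x) = x := by
  simp only [krausDual, Matrix.mul_assoc, hx _]
  simp only [← Matrix.mul_assoc, ← Matrix.sum_mul, hK, Matrix.one_mul]

theorem Intertwines.conjTranspose (hK : ∑ s, (K s)ᴴ * K s = 1) (hσ : σ.PosDef)
    (hfix : IsMarginalFixed K π σ) (hx : Intertwines K π x) : Intertwines K π xᴴ := by
  have hdual : krausDual K (π xᴴ) = xᴴ := by
    rw [← star_eq_conjTranspose, map_star, star_eq_conjTranspose, ← conjTranspose_krausDual,
      hx.krausDual_eq hK, star_eq_conjTranspose]
  exact intertwines_of_trace_eq hK hσ hfix (by rw [hdual])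

theorem Intertwines.commute (hK : ∑ s, (K s)ᴴ * K s = 1) (hπ : Commute (π₁ x) (π₂ y))
    (hx : Intertwines K π₁ x) (hy : Intertwines K π₂ y) : Commute x y := by
  have h : ∀ s, K s * (x * y) = K s * (y * x) := fun s => calc
    K s * (x * y) = π₁ x * π₂ y * K s := by
      rw [Matrix.mul_assoc, hy s, ← Matrix.mul_assoc (π₁ x), hx s, Matrix.mul_assoc]
    _ = π₂ y * π₁ x * K s := by rw [hπ.eq]
    _ = K s * (y * x) := by
      rw [Matrix.mul_assoc, hx s, ← Matrix.mul_assoc (π₂ y), hy s, Matrix.mul_assoc]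
  calc x * y = ∑ s, (K s)ᴴ * (K s * (x * y)) := by
        simp only [← Matrix.mul_assoc (K _)ᴴ, ← Matrix.sum_mul, hK, Matrix.one_mul]
    _ = y * x := by
        simp only [h, ← Matrix.mul_assoc (K _)ᴴ, ← Matrix.sum_mul, hK, Matrix.one_mul]

theorem IsMarginalFixed.intertwines_mul_inv (hR : IsMarginalFixed K π R)
    (hK : ∑ s, (K s)ᴴ * K s = 1) (hσ : σ.PosDef) (hfix : IsMarginalFixed K π σ) :
    Intertwines K π (R * σ⁻¹) := by
  apply intertwines_of_trace_eq hK hσ hfix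
  have hσR : σ * (R * σ⁻¹)ᴴ = Rᴴ := by
    rw [conjTranspose_mul, hσ.isHermitian.inv.eq, ← Matrix.mul_assoc,
      mul_nonsing_inv _ ((isUnit_iff_isUnit_det σ).mp hσ.isUnit), Matrix.one_mul]
  rw [← Matrix.mul_assoc, ← Matrix.mul_assoc, hσR, hR.conjTranspose.trace_mul_krausDual]

/-- Dividing by the faithful fixed state `σ` turns fixed points into intertwined observables.
Those of `π₁` commute with those of `π₂`, which makes the quotients normal, hence commuting
with `σ`. -/
theorem IsMarginalFixed.commute_of_posDef (hK : ∑ s, (K s)ᴴ * K s = 1)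
    (hπ : ∀ x y, Commute (π₁ x) (π₂ y)) (hσ : σ.PosDef)
    (hσ₁ : IsMarginalFixed K π₁ σ) (hσ₂ : IsMarginalFixed K π₂ σ)
    (hR₁ : IsMarginalFixed K π₁ R) (hR₂ : IsMarginalFixed K π₂ R)
    (hS₁ : IsMarginalFixed K π₁ S) (hS₂ : IsMarginalFixed K π₂ S) : Commute R S := by
  have hdet : IsUnit σ.det := (isUnit_iff_isUnit_det σ).mp hσ.isUnit
  have hmul_inv (T : Matrix n n 𝕜) : T * σ⁻¹ * σ = T := nonsing_inv_mul_cancel_right σ T hdet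
  have hcommute {T : Matrix n n 𝕜} (hT₁ : IsMarginalFixed K π₁ T)
      (hT₂ : IsMarginalFixed K π₂ T) : Commute (T * σ⁻¹) σ := by
    have hy₁ := hT₁.conjTranspose.intertwines_mul_inv hK hσ hσ₁
    have hy₂ := hT₂.conjTranspose.intertwines_mul_inv hK hσ hσ₂
    have hsymm : T * σ⁻¹ * σ = σ * (Tᴴ * σ⁻¹)ᴴ := by
      rw [hmul_inv, conjTranspose_mul, hσ.isHermitian.inv.eq, conjTranspose_conjTranspose]
      exact (mul_nonsing_inv_cancel_left σ T hdet).symm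
    have heq := eq_conjTranspose_of_mul_eq hσ hsymm
      ((hT₁.intertwines_mul_inv hK hσ hσ₁).commute hK (hπ _ _) hy₂)
      (hy₁.commute hK (hπ _ _) (hy₂.conjTranspose hK hσ hσ₂))
    rwa [← heq] at hsymm
  have hquot : Commute (R * σ⁻¹) (S * σ⁻¹) :=
    (hR₁.intertwines_mul_inv hK hσ hσ₁).commute hK (hπ _ _) (hS₂.intertwines_mul_inv hK hσ hσ₂)
  rw [← hmul_inv R, ← hmul_inv S]
  exact (hquot.mul_right (hcommute hR₁ hR₂)).mul_left
    ((hcommute hS₁ hS₂).symm.mul_right (Commute.refl σ))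

end FixedPoints

section Support

variable {𝕜 ι k m n : Type*} [RCLike 𝕜] [Fintype k] [Fintype n]

/-- Conjugation `x ↦ W x Wᴴ` by an isometry, as a star homomorphism; it is unital only when `W`
is unitary. -/
def isometryConj [DecidableEq k] (W : Matrix n k 𝕜) (hW : Wᴴ * W = 1) :
    Matrix k k 𝕜 →⋆ₙₐ[𝕜] Matrix n n 𝕜 where
  toFun x := W * x * Wᴴ
  map_smul' c x := by simp only [Matrix.mul_smul, Matrix.smul_mul, MonoidHom.id_apply]
  map_zero' := by simp only [Matrix.mul_zero, Matrix.zero_mul]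
  map_add' x y := by simp only [Matrix.mul_add, Matrix.add_mul]
  map_mul' x y := by
    calc W * (x * y) * Wᴴ = W * x * (Wᴴ * W) * y * Wᴴ := by
          rw [hW, Matrix.mul_one, ← Matrix.mul_assoc]
      _ = W * x * Wᴴ * (W * y * Wᴴ) := by simp only [Matrix.mul_assoc]
  map_star' x := by
    simp only [star_eq_conjTranspose, conjTranspose_mul, conjTranspose_conjTranspose,
      Matrix.mul_assoc]

theorem isometryConj_apply [DecidableEq k] (W : Matrix n k 𝕜) (hW : Wᴴ * W = 1)
    (x : Matrix k k 𝕜) : isometryConj W hW x = W * x * Wᴴ := rfl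

theorem IsMarginalFixed.compress [Fintype ι] [Fintype m] [DecidableEq k] {K : ι → Matrix m n 𝕜}
    {π : Matrix n n 𝕜 →⋆ₙₐ[𝕜] Matrix m m 𝕜} {W : Matrix n k 𝕜} {R : Matrix k k 𝕜}
    (hR : IsMarginalFixed K π (W * R * Wᴴ)) (hW : Wᴴ * W = 1) :
    IsMarginalFixed (fun s => K s * W) (π.comp (isometryConj W hW)) R := by
  intro x
  have hkraus : krausMap (fun s => K s * W) R = krausMap K (W * R * Wᴴ) := by
    simp only [krausMap_apply, conjTranspose_mul, Matrix.mul_assoc]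
  calc (krausMap (fun s => K s * W) R * π (isometryConj W hW x)).trace
    _ = (W * R * Wᴴ * (W * x * Wᴴ)).trace := by rw [hkraus, hR, isometryConj_apply]
    _ = (R * x).trace := by
      rw [← isometryConj_apply W hW R, ← isometryConj_apply W hW x, ← map_mul,
        isometryConj_apply, trace_mul_comm, ← Matrix.mul_assoc, hW, Matrix.one_mul]

variable [DecidableEq n]

/-- The isometry onto the range of `A` whose columns are the eigenvectors of `A` with nonzero
eigenvalue. -/
noncomputable def supportIsometry {A : Matrix n n 𝕜} (hA : A.IsHermitian) :
    Matrix n {i // hA.eigenvalues i ≠ 0} 𝕜 :=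
  (hA.eigenvectorUnitary : Matrix n n 𝕜).submatrix id Subtype.val

variable {A : Matrix n n 𝕜}

theorem conjTranspose_supportIsometry_mul_self (hA : A.IsHermitian) :
    (supportIsometry hA)ᴴ * supportIsometry hA = 1 := by
  have hU : (hA.eigenvectorUnitary : Matrix n n 𝕜)ᴴ * hA.eigenvectorUnitary = 1 :=
    Unitary.coe_star_mul_self _
  calc (supportIsometry hA)ᴴ * supportIsometry hA
    _ = ((hA.eigenvectorUnitary : Matrix n n 𝕜)ᴴ * hA.eigenvectorUnitary).submatrix
        Subtype.val Subtype.val := rfl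
    _ = 1 := by rw [hU, submatrix_one _ Subtype.val_injective]

theorem supportIsometry_mul_diagonal_mul (hA : A.IsHermitian) :
    supportIsometry hA *
      diagonal (fun i : {i // hA.eigenvalues i ≠ 0} => (hA.eigenvalues i : 𝕜)) *
      (supportIsometry hA)ᴴ = A := by
  let U : Matrix n n 𝕜 := (hA.eigenvectorUnitary : Matrix n n 𝕜)
  have hspec : A = U * diagonal (fun i => (hA.eigenvalues i : 𝕜)) * Uᴴ := by
    conv_lhs => rw [hA.spectral_theorem, Unitary.conjStarAlgAut_apply]
    rfl
  ext p q
  calc _ = ∑ i : {i // hA.eigenvalues i ≠ 0}, U p i * hA.eigenvalues i * star (U q i) := by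
        rw [Matrix.mul_apply]
        simp only [mul_diagonal, conjTranspose_apply]
        rfl
    _ = ∑ i, U p i * hA.eigenvalues i * star (U q i) := by
        rw [← Finset.sum_subtype {i | hA.eigenvalues i ≠ 0} (by simp)
          fun i => U p i * hA.eigenvalues i * star (U q i)]
        refine Finset.sum_filter_of_ne fun i _ hi h0 => hi ?_
        rw [h0, RCLike.ofReal_zero, mul_zero, zero_mul]
    _ = A p q := by
        conv_rhs => rw [hspec, Matrix.mul_apply]
        simp only [mul_diagonal, conjTranspose_apply]

theorem conjTranspose_supportIsometry_mul_mul (hA : A.IsHermitian) :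
    (supportIsometry hA)ᴴ * A * supportIsometry hA =
      diagonal (fun i : {i // hA.eigenvalues i ≠ 0} => (hA.eigenvalues i : 𝕜)) := by
  set W := supportIsometry hA
  have hW : Wᴴ * W = 1 := conjTranspose_supportIsometry_mul_self hA
  set D := diagonal fun i : {i // hA.eigenvalues i ≠ 0} => (hA.eigenvalues i : 𝕜)
  have hA' : W * D * Wᴴ = A := supportIsometry_mul_diagonal_mul hA
  calc Wᴴ * A * W = Wᴴ * (W * D * Wᴴ) * W := by rw [hA']
    _ = Wᴴ * W * D * (Wᴴ * W) := by simp only [Matrix.mul_assoc]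
    _ = D := by rw [hW, Matrix.one_mul, Matrix.mul_one]

theorem posDef_conjTranspose_supportIsometry_mul_mul (hA : A.PosSemidef) :
    ((supportIsometry hA.isHermitian)ᴴ * A * supportIsometry hA.isHermitian).PosDef := by
  rw [conjTranspose_supportIsometry_mul_mul]
  exact PosDef.diagonal fun i =>
    RCLike.ofReal_pos.mpr ((hA.eigenvalues_nonneg i).lt_of_ne' i.2)

theorem mul_supportIsometry_mul_conjTranspose (hA : A.IsHermitian) :
    A * (supportIsometry hA * (supportIsometry hA)ᴴ) = A := by
  set W := supportIsometry hA
  have hW : Wᴴ * W = 1 := conjTranspose_supportIsometry_mul_self hA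
  set D := diagonal fun i : {i // hA.eigenvalues i ≠ 0} => (hA.eigenvalues i : 𝕜)
  have hA' : W * D * Wᴴ = A := supportIsometry_mul_diagonal_mul hA
  calc A * (W * Wᴴ) = W * D * Wᴴ * (W * Wᴴ) := by rw [hA']
    _ = W * D * (Wᴴ * W) * Wᴴ := by simp only [Matrix.mul_assoc]
    _ = A := by rw [hW, Matrix.mul_one, hA']

theorem eq_compress_supportIsometry {R : Matrix n n 𝕜} (hA : A.IsHermitian)
    (hR : ∀ Q : Matrix n n 𝕜, A * Q = 0 → R * Q = 0)
    (hR' : ∀ Q : Matrix n n 𝕜, A * Q = 0 → Rᴴ * Q = 0) :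
    R = supportIsometry hA * ((supportIsometry hA)ᴴ * R * supportIsometry hA) *
      (supportIsometry hA)ᴴ := by
  set P := supportIsometry hA * (supportIsometry hA)ᴴ with hP
  have hAP : A * (1 - P) = 0 := by
    rw [Matrix.mul_sub, Matrix.mul_one, hP, mul_supportIsometry_mul_conjTranspose, sub_self]
  have hright : R = R * P := by
    simpa only [Matrix.mul_sub, Matrix.mul_one, sub_eq_zero] using hR _ hAP
  have hleft : R = P * R := by
    have h : Rᴴ = Rᴴ * P := by
      simpa only [Matrix.mul_sub, Matrix.mul_one, sub_eq_zero] using hR' _ hAP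
    simpa only [hP, conjTranspose_mul, conjTranspose_conjTranspose] using
      congrArg Matrix.conjTranspose h
  calc R = P * (R * P) := by rw [← hright, ← hleft]
    _ = _ := by simp only [hP, Matrix.mul_assoc]

theorem IsMarginalFixed.commute [Fintype ι] [Fintype m] {K : ι → Matrix m n 𝕜}
    {π₁ π₂ : Matrix n n 𝕜 →⋆ₙₐ[𝕜] Matrix m m 𝕜} {σ R S : Matrix n n 𝕜}
    (hK : ∑ s, (K s)ᴴ * K s = 1) (hπ : ∀ x y, Commute (π₁ x) (π₂ y)) (hσ : σ.PosSemidef)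
    (hσ₁ : IsMarginalFixed K π₁ σ) (hσ₂ : IsMarginalFixed K π₂ σ)
    (hR₁ : IsMarginalFixed K π₁ R) (hR₂ : IsMarginalFixed K π₂ R)
    (hS₁ : IsMarginalFixed K π₁ S) (hS₂ : IsMarginalFixed K π₂ S)
    (hR : ∀ Q : Matrix n n 𝕜, σ * Q = 0 → R * Q = 0)
    (hR' : ∀ Q : Matrix n n 𝕜, σ * Q = 0 → Rᴴ * Q = 0)
    (hS : ∀ Q : Matrix n n 𝕜, σ * Q = 0 → S * Q = 0)
    (hS' : ∀ Q : Matrix n n 𝕜, σ * Q = 0 → Sᴴ * Q = 0) : Commute R S := by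
  set W := supportIsometry hσ.isHermitian
  have hW : Wᴴ * W = 1 := conjTranspose_supportIsometry_mul_self _
  have hσW := eq_compress_supportIsometry hσ.isHermitian (R := σ) (fun _ h => h)
    (fun Q h => by rwa [hσ.isHermitian.eq])
  have hRW := eq_compress_supportIsometry hσ.isHermitian hR hR'
  have hSW := eq_compress_supportIsometry hσ.isHermitian hS hS'
  have hKW : ∑ s, (K s * W)ᴴ * (K s * W) = 1 := by
    calc ∑ s, (K s * W)ᴴ * (K s * W) = Wᴴ * (∑ s, (K s)ᴴ * K s) * W := by
          simp only [conjTranspose_mul, Matrix.mul_sum, Matrix.sum_mul, Matrix.mul_assoc]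
      _ = 1 := by rw [hK, Matrix.mul_one, hW]
  rw [hσW] at hσ₁ hσ₂
  rw [hRW] at hR₁ hR₂
  rw [hSW] at hS₁ hS₂
  have hcompressed := IsMarginalFixed.commute_of_posDef hKW (fun x y => hπ _ _)
    (posDef_conjTranspose_supportIsometry_mul_mul hσ) (hσ₁.compress hW) (hσ₂.compress hW)
    (hR₁.compress hW) (hR₂.compress hW) (hS₁.compress hW) (hS₂.compress hW)
  rw [hRW, hSW]
  exact hcompressed.map (isometryConj W hW)

end Support

section Blocks

variable {R 𝕜 α β γ κ ι m n : Type*}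

/-- The operator `⟨a| M |a'⟩` on the second tensor factor. -/
def block (M : Matrix (α × β) (α × β) R) (a a' : α) : Matrix β β R :=
  M.submatrix (Prod.mk a) (Prod.mk a')

theorem block_ext_iff {M N : Matrix (α × β) (α × β) R} :
    M = N ↔ ∀ a a', block M a a' = block N a a' :=
  ⟨fun h _ _ => by rw [h], fun h => by
    ext p q
    exact congrFun (congrFun (h p.1 q.1) p.2) q.2⟩

variable [CommSemiring R] [RCLike 𝕜]

theorem conjTranspose_block (M : Matrix (α × β) (α × β) 𝕜) (a a' : α) :
    (block M a a')ᴴ = block Mᴴ a' a := rfl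

theorem block_sum_kronecker [Fintype κ] (A : κ → Matrix α α R) (B : κ → Matrix β β R) (a a' : α) :
    block (∑ j, A j ⊗ₖ B j) a a' = ∑ j, A j a a' • B j := by
  ext b b'
  simp only [block, submatrix_apply, Matrix.sum_apply, kroneckerMap_apply, Matrix.smul_apply,
    smul_eq_mul]

/-- Partial trace over the second tensor factor. -/
def traceRight [Fintype n] : Matrix (m × n) (m × n) R →ₗ[R] Matrix m m R where
  toFun M := of fun i j => ∑ c, M (i, c) (j, c)
  map_add' M N := by
    ext i j
    exact Finset.sum_add_distrib
  map_smul' c M := by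
    ext i j
    exact (Finset.mul_sum _ _ _).symm

/-- Partial trace over the first tensor factor. -/
def traceLeft [Fintype m] : Matrix (m × n) (m × n) R →ₗ[R] Matrix n n R where
  toFun M := of fun i j => ∑ c, M (c, i) (c, j)
  map_add' M N := by
    ext i j
    exact Finset.sum_add_distrib
  map_smul' c M := by
    ext i j
    exact (Finset.mul_sum _ _ _).symm

theorem traceRight_kronecker [Fintype n] (A : Matrix m m R) (B : Matrix n n R) :
    traceRight (A ⊗ₖ B) = B.trace • A := by
  ext i j
  exact (Finset.mul_sum _ _ (A i j)).symm.trans (mul_comm _ _)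

theorem traceLeft_kronecker [Fintype m] (A : Matrix m m R) (B : Matrix n n R) :
    traceLeft (A ⊗ₖ B) = A.trace • B := by
  ext i j
  exact (Finset.sum_mul _ _ (B i j)).symm

theorem traceLeft_eq_sum_block [Fintype α] (M : Matrix (α × β) (α × β) R) :
    traceLeft M = ∑ a, block M a a := by
  ext b b'
  simp only [Matrix.sum_apply]
  rfl

theorem trace_mul_kronecker_one [Fintype m] [Fintype n] [DecidableEq n]
    (M : Matrix (m × n) (m × n) R) (x : Matrix m m R) :
    (M * (x ⊗ₖ 1)).trace = (traceRight M * x).trace := by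
  simp only [trace, diag_apply, Matrix.mul_apply, kroneckerMap_apply, Fintype.sum_prod_type,
    Matrix.one_apply, mul_ite, mul_one, mul_zero, Finset.sum_ite_eq', Finset.mem_univ, if_true,
    traceRight, LinearMap.coe_mk, AddHom.coe_mk, of_apply, Finset.sum_mul]
  exact Finset.sum_congr rfl fun i _ => Finset.sum_comm

theorem trace_mul_one_kronecker [Fintype m] [Fintype n] [DecidableEq m]
    (M : Matrix (m × n) (m × n) R) (x : Matrix n n R) :
    (M * (1 ⊗ₖ x)).trace = (traceLeft M * x).trace := by
  simp only [trace, diag_apply, Matrix.mul_apply, kroneckerMap_apply, Fintype.sum_prod_type_right,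
    Matrix.one_apply, ite_mul, one_mul, zero_mul, mul_ite, mul_zero, Finset.sum_ite_eq',
    Finset.mem_univ, if_true, traceLeft, LinearMap.coe_mk, AddHom.coe_mk, of_apply, Finset.sum_mul]
  exact Finset.sum_congr rfl fun i _ => Finset.sum_comm

theorem block_idTensor (Λ : Matrix β β ℂ →ₗ[ℂ] Matrix γ γ ℂ) (M : Matrix (α × β) (α × β) ℂ)
    (a a' : α) : block (idTensor Λ M) a a' = Λ (block M a a') := rfl

theorem ptraceThird_eq_iff_block [Fintype γ] {M : Matrix (α × β × γ) (α × β × γ) ℂ}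
    {N : Matrix (α × β) (α × β) ℂ} :
    ptraceThird M = N ↔ ∀ a a', traceRight (block M a a') = block N a a' :=
  block_ext_iff

theorem ptraceSecond_eq_iff_block [Fintype β] {M : Matrix (α × β × γ) (α × β × γ) ℂ}
    {N : Matrix (α × γ) (α × γ) ℂ} :
    ptraceSecond M = N ↔ ∀ a a', traceLeft (block M a a') = block N a a' :=
  block_ext_iff

/-- The embedding `x ↦ x ⊗ 1` of the observables of the first tensor factor. -/
def kroneckerOne [Fintype m] [Fintype n] [DecidableEq n] :
    Matrix m m 𝕜 →⋆ₙₐ[𝕜] Matrix (m × n) (m × n) 𝕜 where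
  toFun x := x ⊗ₖ 1
  map_smul' c x := smul_kronecker c x 1
  map_zero' := zero_kronecker _
  map_add' x y := add_kronecker x y 1
  map_mul' x y := by rw [← mul_kronecker_mul, Matrix.one_mul]
  map_star' x := by
    simp only [star_eq_conjTranspose, conjTranspose_kronecker, conjTranspose_one]

/-- The embedding `x ↦ 1 ⊗ x` of the observables of the second tensor factor. -/
def oneKronecker [Fintype m] [DecidableEq m] [Fintype n] :
    Matrix n n 𝕜 →⋆ₙₐ[𝕜] Matrix (m × n) (m × n) 𝕜 where
  toFun x := 1 ⊗ₖ x
  map_smul' c x := kronecker_smul c 1 x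
  map_zero' := kronecker_zero _
  map_add' x y := kronecker_add 1 x y
  map_mul' x y := by rw [← mul_kronecker_mul, Matrix.one_mul]
  map_star' x := by
    simp only [star_eq_conjTranspose, conjTranspose_kronecker, conjTranspose_one]

theorem commute_kroneckerOne_oneKronecker [Fintype m] [DecidableEq m] [Fintype n] [DecidableEq n]
    (x : Matrix m m 𝕜) (y : Matrix n n 𝕜) :
    Commute (kroneckerOne x : Matrix (m × n) (m × n) 𝕜) (oneKronecker y) := by
  change x ⊗ₖ 1 * 1 ⊗ₖ y = 1 ⊗ₖ y * x ⊗ₖ 1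
  rw [← mul_kronecker_mul, ← mul_kronecker_mul, Matrix.mul_one, Matrix.one_mul, Matrix.one_mul,
    Matrix.mul_one]

theorem isMarginalFixed_kroneckerOne_iff [Fintype ι] [Fintype m] [Fintype n] [DecidableEq n]
    {K : ι → Matrix (m × n) m 𝕜} {X : Matrix m m 𝕜} :
    IsMarginalFixed K kroneckerOne X ↔ traceRight (krausMap K X) = X := by
  rw [ext_iff_trace_mul_right]
  exact forall_congr' fun x => by rw [← trace_mul_kronecker_one]; rfl

theorem isMarginalFixed_oneKronecker_iff [Fintype ι] [Fintype m] [DecidableEq m] [Fintype n]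
    {K : ι → Matrix (m × n) n 𝕜} {X : Matrix n n 𝕜} :
    IsMarginalFixed K oneKronecker X ↔ traceLeft (krausMap K X) = X := by
  rw [ext_iff_trace_mul_right]
  exact forall_congr' fun x => by rw [← trace_mul_one_kronecker]; rfl

open scoped MatrixOrder in
theorem exists_eq_conjTranspose_mul_self [Fintype n] {A : Matrix n n 𝕜} (hA : A.PosSemidef) :
    ∃ B : Matrix n n 𝕜, A = Bᴴ * B := by
  classical exact CStarAlgebra.nonneg_iff_eq_star_mul_self.mp hA.nonneg

theorem exists_block_eq_conjTranspose_mul [Fintype α] [Fintype β] {M : Matrix (α × β) (α × β) 𝕜}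
    (hM : M.PosSemidef) :
    ∃ C : α → Matrix (α × β) β 𝕜, ∀ a a', block M a a' = (C a)ᴴ * C a' := by
  obtain ⟨B, rfl⟩ := exists_eq_conjTranspose_mul_self hM
  exact ⟨fun a => B.submatrix id (Prod.mk a), fun a a' => rfl⟩

theorem posSemidef_traceLeft [Fintype α] {M : Matrix (α × β) (α × β) 𝕜}
    (hM : M.PosSemidef) : (traceLeft M).PosSemidef := by
  rw [traceLeft_eq_sum_block]
  exact posSemidef_sum _ fun a _ => hM.submatrix _

theorem block_mul_eq_zero_of_traceLeft_mul_eq_zero [Fintype α] [Fintype β]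
    {M : Matrix (α × β) (α × β) 𝕜} (hM : M.PosSemidef) {Q : Matrix β β 𝕜}
    (hQ : traceLeft M * Q = 0) (a a' : α) : block M a a' * Q = 0 := by
  obtain ⟨C, hC⟩ := exists_block_eq_conjTranspose_mul hM
  have hsum : ∑ a, ((C a * Q)ᴴ * (C a * Q)).trace = 0 := by
    calc ∑ a, ((C a * Q)ᴴ * (C a * Q)).trace = (Qᴴ * (traceLeft M * Q)).trace := by
          simp only [traceLeft_eq_sum_block, hC, conjTranspose_mul, Matrix.sum_mul,
            Matrix.mul_sum, trace_sum, Matrix.mul_assoc]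
      _ = 0 := by rw [hQ, Matrix.mul_zero, trace_zero]
  have hzero := (Finset.sum_eq_zero_iff_of_nonneg fun a _ =>
    (posSemidef_conjTranspose_mul_self (C a * Q)).trace_nonneg).mp hsum a' (Finset.mem_univ _)
  rw [hC, Matrix.mul_assoc, trace_conjTranspose_mul_self_eq_zero_iff.mp hzero, Matrix.mul_zero]

end Blocks

section KrausRepresentation

variable {β γ : Type*}

/-- The Choi matrix `∑ᵢⱼ |i⟩⟨j| ⊗ Λ(|i⟩⟨j|)`. -/
def choiMatrix [DecidableEq β] (Λ : Matrix β β ℂ →ₗ[ℂ] Matrix γ γ ℂ) :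
    Matrix (β × γ) (β × γ) ℂ :=
  of fun p q => Λ (single p.1 q.1 1) p.2 q.2

theorem posSemidef_choiMatrix [Finite β] [DecidableEq β]
    {Λ : Matrix β β ℂ →ₗ[ℂ] Matrix γ γ ℂ} (hΛ : IsCompletelyPositive Λ) :
    (choiMatrix Λ).PosSemidef := by
  obtain ⟨k, ⟨e⟩⟩ := Finite.exists_equiv_fin β
  let w : Fin k × β → ℂ := fun p => if p.1 = e p.2 then 1 else 0
  have hblock (i j : β) : block (vecMulVec w (star w)) (e i) (e j) = single i j 1 := by
    ext b b'
    simp only [block, submatrix_apply, vecMulVec_apply, Pi.star_apply, w,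
      EmbeddingLike.apply_eq_iff_eq, apply_ite star, star_one, star_zero, single_apply, ite_and,
      ite_mul, one_mul, zero_mul]
  have hchoi : choiMatrix Λ =
      (idTensor Λ (vecMulVec w (star w))).submatrix (Prod.map e id) (Prod.map e id) := by
    refine block_ext_iff.mpr fun i j => ?_
    exact congrArg Λ (hblock i j).symm
  rw [hchoi]
  exact (hΛ _ _ (posSemidef_vecMulVec_self_star w)).submatrix _

theorem exists_eq_krausMap [Fintype β] [Fintype γ] {Λ : Matrix β β ℂ →ₗ[ℂ] Matrix γ γ ℂ}
    (hΛ : IsCompletelyPositive Λ) :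
    ∃ K : β × γ → Matrix γ β ℂ, Λ = krausMap K := by
  classical
  obtain ⟨B, hB⟩ := exists_eq_conjTranspose_mul_self (posSemidef_choiMatrix hΛ)
  refine ⟨fun s => of fun p i => star (B s (i, p)), ?_⟩
  refine ext_linearMap ℂ fun i j => LinearMap.ext_ring ?_
  ext p q
  have h := congrFun (congrFun hB (i, p)) (j, q)
  simpa [krausMap_apply, Matrix.sum_apply, Matrix.mul_apply, choiMatrix, single_apply, ite_and]
    using h

end KrausRepresentation

section SimultaneousDiagonalization

variable {𝕜 ι n : Type*} [RCLike 𝕜] [Fintype n]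

theorem exists_orthonormalBasis_mulVec_eq_smul_of_isHermitian {T : ι → Matrix n n 𝕜}
    (hT : ∀ i, (T i).IsHermitian) (hcomm : ∀ i j, Commute (T i) (T j)) :
    ∃ b : OrthonormalBasis n 𝕜 (EuclideanSpace 𝕜 n),
      ∀ i j, ∃ c : 𝕜, T i *ᵥ (b j).ofLp = c • (b j).ofLp := by
  classical
  let L (i : ι) : EuclideanSpace 𝕜 n →ₗ[𝕜] EuclideanSpace 𝕜 n := (T i).toEuclideanLin
  have hsymm (i : ι) : (L i).IsSymmetric := isSymmetric_toEuclideanLin_iff.mpr (hT i)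
  have hLcomm : Pairwise (Function.onFun Commute L) := fun i j _ => by
    ext v : 1
    simp [L, toLpLin_apply, (hcomm i j).eq]
  let E (χ : ι → 𝕜) := ⨅ i, Module.End.eigenspace (L i) (χ i)
  have hE : DirectSum.IsInternal E :=
    LinearMap.IsSymmetric.directSum_isInternal_of_pairwise_commute hsymm hLcomm
  have : Fintype {χ // E χ ≠ ⊥} :=
    (WellFoundedGT.finite_ne_bot_of_iSupIndep hE.submodule_iSupIndep).fintype
  have horth := (LinearMap.IsSymmetric.orthogonalFamily_iInf_eigenspaces hsymm).comp
    (Subtype.val_injective (p := fun χ => E χ ≠ ⊥))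
  have hne := DirectSum.isInternal_ne_bot_iff.mpr hE
  have hcard : Module.finrank 𝕜 (EuclideanSpace 𝕜 n) = Fintype.card n := finrank_euclideanSpace
  refine ⟨(hne.subordinateOrthonormalBasis hcard horth).reindex (Fintype.equivFin n).symm,
    fun i j => ⟨(hne.subordinateOrthonormalBasisIndex hcard (Fintype.equivFin n j) horth).1 i, ?_⟩⟩
  have hmem := hne.subordinateOrthonormalBasis_subordinate hcard (Fintype.equivFin n j) horth
  have heigen := Module.End.mem_eigenspace_iff.mp ((Submodule.mem_iInf _).mp hmem i)
  simpa [L, toLpLin_apply] using congrArg WithLp.ofLp heigen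

theorem exists_orthonormalBasis_mulVec_eq_smul {T : ι → Matrix n n ℂ}
    (hcomm : ∀ i j, Commute (T i) (T j)) (hcomm' : ∀ i j, Commute (T i) (T j)ᴴ) :
    ∃ b : OrthonormalBasis n ℂ (EuclideanSpace ℂ n),
      ∀ i j, ∃ c : ℂ, T i *ᵥ (b j).ofLp = c • (b j).ofLp := by
  let H : ι ⊕ ι → Matrix n n ℂ := Sum.elim (fun i => realPart (T i)) fun i => imaginaryPart (T i)
  have hH : ∀ s, (H s).IsHermitian := by
    rintro (i | i)
    exacts [(realPart (T i)).2, (imaginaryPart (T i)).2]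
  have hH_of {X : Matrix n n ℂ} (hX : ∀ i, Commute (T i) X ∧ Commute (T i)ᴴ X) :
      ∀ s, Commute (H s) X := by
    rintro (i | i)
    · simp only [H, Sum.elim_inl, realPart_apply_coe]
      exact ((hX i).1.add_left (hX i).2).smul_left _
    · simp only [H, Sum.elim_inr, imaginaryPart_apply_coe]
      exact (((hX i).1.sub_left (hX i).2).smul_left _).smul_left _
  have hadj (i j : ι) : Commute (T i)ᴴ (T j)ᴴ := (hcomm i j).star_star
  have hHcomm : ∀ s t, Commute (H s) (H t) := fun s t => hH_of (fun i =>
    ⟨(hH_of (fun j => ⟨hcomm j i, (hcomm' i j).symm⟩) t).symm,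
      (hH_of (fun j => ⟨hcomm' j i, hadj j i⟩) t).symm⟩) s
  obtain ⟨b, hb⟩ := exists_orthonormalBasis_mulVec_eq_smul_of_isHermitian hH hHcomm
  refine ⟨b, fun i j => ?_⟩
  obtain ⟨c, hc⟩ := hb (Sum.inl i) j
  obtain ⟨d, hd⟩ := hb (Sum.inr i) j
  refine ⟨c + Complex.I * d, ?_⟩
  rw [← realPart_add_I_smul_imaginaryPart (T i), add_mulVec, smul_mulVec]
  simp only [H, Sum.elim_inl, Sum.elim_inr] at hc hd
  rw [hc, hd, smul_smul, add_smul]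

end SimultaneousDiagonalization

section MeasureAndPrepare

variable {α β γ κ : Type*} [Fintype β] [Fintype κ]

/-- The operator `⟨v| M |v⟩` on the first tensor factor. -/
def compressRight (v : β → ℂ) (M : Matrix (α × β) (α × β) ℂ) : Matrix α α ℂ :=
  of fun a a' => star v ⬝ᵥ block M a a' *ᵥ v

theorem posSemidef_compressRight [Finite α] {M : Matrix (α × β) (α × β) ℂ} (hM : M.PosSemidef)
    (v : β → ℂ) : (compressRight v M).PosSemidef := by
  cases nonempty_fintype α
  obtain ⟨C, hC⟩ := exists_block_eq_conjTranspose_mul hM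
  have hgram : compressRight v M =
      (of fun p a => (C a *ᵥ v) p)ᴴ * of fun p a => (C a *ᵥ v) p := by
    ext a a'
    rw [compressRight, of_apply, hC, ← mulVec_mulVec, dotProduct_mulVec, vecMul_conjTranspose,
      star_star]
    rfl
  rw [hgram]
  exact posSemidef_conjTranspose_mul_self _

/-- The channel that measures the vectors `v j` and prepares `ω j` on outcome `j`. -/
def measurePrepare (v : κ → β → ℂ) (ω : κ → Matrix γ γ ℂ) :
    Matrix β β ℂ →ₗ[ℂ] Matrix γ γ ℂ where
  toFun X := ∑ j, (star (v j) ⬝ᵥ X *ᵥ v j) • ω j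
  map_add' X Y := by
    simp only [add_mulVec, dotProduct_add, add_smul, Finset.sum_add_distrib]
  map_smul' c X := by
    simp only [smul_mulVec, dotProduct_smul, smul_eq_mul, mul_smul, Finset.smul_sum,
      RingHom.id_apply]

theorem measurePrepare_apply (v : κ → β → ℂ) (ω : κ → Matrix γ γ ℂ) (X : Matrix β β ℂ) :
    measurePrepare v ω X = ∑ j, (star (v j) ⬝ᵥ X *ᵥ v j) • ω j := rfl

theorem idTensor_measurePrepare (v : κ → β → ℂ) (ω : κ → Matrix γ γ ℂ)
    (M : Matrix (α × β) (α × β) ℂ) :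
    idTensor (measurePrepare v ω) M = ∑ j, compressRight (v j) M ⊗ₖ ω j :=
  block_ext_iff.mpr fun a a' => by
    rw [block_idTensor, block_sum_kronecker]
    rfl

theorem isCompletelyPositive_measurePrepare [Finite γ] (v : κ → β → ℂ) {ω : κ → Matrix γ γ ℂ}
    (hω : ∀ j, (ω j).PosSemidef) : IsCompletelyPositive (measurePrepare v ω) := by
  intro k M hM
  rw [idTensor_measurePrepare]
  exact posSemidef_sum _ fun j _ => (posSemidef_compressRight hM (v j)).kronecker (hω j)

theorem isQuantumChannel_measurePrepare [Fintype γ] [DecidableEq β] {v : κ → β → ℂ}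
    {ω : κ → Matrix γ γ ℂ} (hv : ∑ j, vecMulVec (v j) (star (v j)) = 1)
    (hω : ∀ j, IsDensityMatrix (ω j)) : IsQuantumChannel (measurePrepare v ω) := by
  refine ⟨isCompletelyPositive_measurePrepare v fun j => (hω j).1, fun X => ?_⟩
  calc (measurePrepare v ω X).trace = ∑ j, star (v j) ⬝ᵥ X *ᵥ v j := by
        simp only [measurePrepare_apply, trace_sum, trace_smul, (hω _).2, smul_eq_mul, mul_one]
    _ = (X * ∑ j, vecMulVec (v j) (star (v j))).trace := by
        simp only [Matrix.mul_sum, trace_sum, mul_vecMulVec, trace_vecMulVec, dotProduct_comm]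
    _ = X.trace := by rw [hv, Matrix.mul_one]

theorem isDensityMatrix_vecMulVec_star {v : β → ℂ} (hv : star v ⬝ᵥ v = 1) :
    IsDensityMatrix (vecMulVec v (star v)) :=
  ⟨posSemidef_vecMulVec_self_star v, by rw [trace_vecMulVec, dotProduct_comm, hv]⟩

theorem IsDensityMatrix.kronecker [Fintype γ] {τ : Matrix β β ℂ} {ω : Matrix γ γ ℂ}
    (hτ : IsDensityMatrix τ) (hω : IsDensityMatrix ω) : IsDensityMatrix (τ ⊗ₖ ω) :=
  ⟨hτ.1.kronecker hω.1, by rw [trace_kronecker, hτ.2, hω.2, mul_one]⟩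

theorem IsDensityMatrix.nonempty {τ : Matrix β β ℂ} (hτ : IsDensityMatrix τ) : Nonempty β := by
  by_contra h
  rw [not_nonempty_iff] at h
  exact zero_ne_one (trace_eq_zero_of_isEmpty τ ▸ hτ.2)

theorem exists_isDensityMatrix_smul_eq [Nonempty β] {t : Matrix β β ℂ} (ht : t.PosSemidef) :
    ∃ τ, IsDensityMatrix τ ∧ t = (t.trace.re : ℂ) • τ := by
  classical
  have htrace : (t.trace.re : ℂ) = t.trace :=
    (Complex.eq_re_of_ofReal_le (r := 0) (by simpa using ht.trace_nonneg)).symm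
  rw [htrace]
  by_cases h0 : t.trace = 0
  · obtain ⟨b⟩ := ‹Nonempty β›
    refine ⟨vecMulVec (Pi.single b 1) (star (Pi.single b 1)), isDensityMatrix_vecMulVec_star ?_, ?_⟩
    · simp
    · rw [h0, zero_smul, ht.trace_eq_zero_iff.mp h0]
  · exact ⟨t.trace⁻¹ • t, ⟨ht.smul (inv_nonneg.mpr ht.trace_nonneg), by
      rw [trace_smul, smul_eq_mul, inv_mul_cancel₀ h0]⟩, (smul_inv_smul₀ h0 t).symm⟩

end MeasureAndPrepare

section ClassicalStates

variable {α β : Type*} [Fintype β] [DecidableEq β] {v : β → β → ℂ}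
  {ρ : Matrix (α × β) (α × β) ℂ}

theorem sum_vecMulVec_star_eq_one (hv : ∀ j j', star (v j) ⬝ᵥ v j' = if j = j' then 1 else 0) :
    ∑ j, vecMulVec (v j) (star (v j)) = 1 := by
  let U : Matrix β β ℂ := of fun i j => v j i
  have hU : Uᴴ * U = 1 := by
    ext j j'
    rw [Matrix.one_apply, ← hv j j']
    rfl
  rw [← mul_eq_one_comm.mp hU]
  ext i i'
  simp only [Matrix.sum_apply, vecMulVec_apply, Matrix.mul_apply, conjTranspose_apply,
    Pi.star_apply, U, of_apply]

theorem isDensityMatrix_vecMulVec_star_of_orthonormal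
    (hv : ∀ j j', star (v j) ⬝ᵥ v j' = if j = j' then 1 else 0) (j : β) :
    IsDensityMatrix (vecMulVec (v j) (star (v j))) :=
  isDensityMatrix_vecMulVec_star ((hv j j).trans (if_pos rfl))

theorem eq_sum_compressRight_kronecker
    (hv : ∀ j j', star (v j) ⬝ᵥ v j' = if j = j' then 1 else 0)
    (heigen : ∀ a a' j, ∃ c : ℂ, block ρ a a' *ᵥ v j = c • v j) :
    ρ = ∑ j, compressRight (v j) ρ ⊗ₖ vecMulVec (v j) (star (v j)) := by
  refine block_ext_iff.mpr fun a a' => ?_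
  rw [block_sum_kronecker, ← Matrix.mul_one (block ρ a a'), ← sum_vecMulVec_star_eq_one hv,
    Matrix.mul_sum]
  refine Finset.sum_congr rfl fun j _ => ?_
  obtain ⟨c, hc⟩ := heigen a a' j
  rw [mul_vecMulVec, compressRight, of_apply, hc, dotProduct_smul, hv, if_pos rfl, smul_eq_mul,
    mul_one, smul_vecMulVec]

theorem classicalOnB_of_eigenvectors [Fintype α] (hρ : IsDensityMatrix ρ)
    (hv : ∀ j j', star (v j) ⬝ᵥ v j' = if j = j' then 1 else 0)
    (heigen : ∀ a a' j, ∃ c : ℂ, block ρ a a' *ᵥ v j = c • v j) : ClassicalOnB ρ := by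
  have : Nonempty α := hρ.nonempty.map Prod.fst
  have hpos (j : β) := posSemidef_compressRight hρ.1 (v j)
  have hsum := eq_sum_compressRight_kronecker hv heigen
  choose τ hτ hτ' using fun j => exists_isDensityMatrix_smul_eq (hpos j)
  refine ⟨fun j => (compressRight (v j) ρ).trace.re, τ, v, fun j => ?_, ?_, hτ, hv, ?_⟩
  · exact (Complex.le_def.mp (hpos j).trace_nonneg).1
  · have htrace : ∑ j, (compressRight (v j) ρ).trace = 1 := by
      rw [← hρ.2]
      conv_rhs => rw [hsum]
      simp only [trace_sum, trace_kronecker,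
        (isDensityMatrix_vecMulVec_star_of_orthonormal hv _).2, mul_one]
    rw [← Complex.re_sum, htrace, Complex.one_re]
  · simpa only [← smul_kronecker, ← hτ'] using hsum

/-- The channel that measures the basis `v` and prepares two copies of the outcome. -/
def copyChannel (v : β → β → ℂ) : Matrix β β ℂ →ₗ[ℂ] Matrix (β × β) (β × β) ℂ :=
  measurePrepare v fun j => vecMulVec (v j) (star (v j)) ⊗ₖ vecMulVec (v j) (star (v j))

theorem isQuantumChannel_copyChannel
    (hv : ∀ j j', star (v j) ⬝ᵥ v j' = if j = j' then 1 else 0) :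
    IsQuantumChannel (copyChannel v) :=
  have hdensity := isDensityMatrix_vecMulVec_star_of_orthonormal hv
  isQuantumChannel_measurePrepare (sum_vecMulVec_star_eq_one hv) fun j =>
    (hdensity j).kronecker (hdensity j)

theorem copyChannel_sum_smul (hv : ∀ j j', star (v j) ⬝ᵥ v j' = if j = j' then 1 else 0)
    (c : β → ℂ) :
    copyChannel v (∑ j, c j • vecMulVec (v j) (star (v j))) =
      ∑ j, c j • (vecMulVec (v j) (star (v j)) ⊗ₖ vecMulVec (v j) (star (v j))) := by
  refine Finset.sum_congr rfl fun i _ => ?_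
  congr 1
  simp [sum_mulVec, smul_mulVec, vecMulVec_mulVec, dotProduct_smul, hv]

theorem ptraceThird_idTensor_copyChannel_sum_kronecker
    (hv : ∀ j j', star (v j) ⬝ᵥ v j' = if j = j' then 1 else 0) (t : β → Matrix α α ℂ) :
    ptraceThird (idTensor (copyChannel v) (∑ j, t j ⊗ₖ vecMulVec (v j) (star (v j)))) =
      ∑ j, t j ⊗ₖ vecMulVec (v j) (star (v j)) := by
  refine ptraceThird_eq_iff_block.mpr fun a a' => ?_
  rw [block_idTensor, block_sum_kronecker, copyChannel_sum_smul hv]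
  simp only [map_sum, map_smul, traceRight_kronecker,
    (isDensityMatrix_vecMulVec_star_of_orthonormal hv _).2, one_smul]

theorem ptraceSecond_idTensor_copyChannel_sum_kronecker
    (hv : ∀ j j', star (v j) ⬝ᵥ v j' = if j = j' then 1 else 0) (t : β → Matrix α α ℂ) :
    ptraceSecond (idTensor (copyChannel v) (∑ j, t j ⊗ₖ vecMulVec (v j) (star (v j)))) =
      ∑ j, t j ⊗ₖ vecMulVec (v j) (star (v j)) := by
  refine ptraceSecond_eq_iff_block.mpr fun a a' => ?_
  rw [block_idTensor, block_sum_kronecker, copyChannel_sum_smul hv]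
  simp only [map_sum, map_smul, traceLeft_kronecker,
    (isDensityMatrix_vecMulVec_star_of_orthonormal hv _).2, one_smul]

end ClassicalStates

section Broadcasting

variable {α β : Type*} [Fintype β]

/-- The channel `Γ : B → B₁B₂` broadcasts `ρ` on `B`: both `ABᵢ` marginals of
`(id_A ⊗ Γ)[ρ]` are `ρ`. -/
def Broadcasts (Γ : Matrix β β ℂ →ₗ[ℂ] Matrix (β × β) (β × β) ℂ)
    (ρ : Matrix (α × β) (α × β) ℂ) : Prop :=
  IsQuantumChannel Γ ∧ ptraceThird (idTensor Γ ρ) = ρ ∧ ptraceSecond (idTensor Γ ρ) = ρ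

variable {Γ : Matrix β β ℂ →ₗ[ℂ] Matrix (β × β) (β × β) ℂ} {ρ : Matrix (α × β) (α × β) ℂ}

theorem ClassicalOnB.exists_broadcasts [Fintype α] [DecidableEq β] (hρ : ClassicalOnB ρ) :
    ∃ Γ, Broadcasts Γ ρ := by
  obtain ⟨p, τ, v, -, -, -, hv, rfl⟩ := hρ
  simp only [← smul_kronecker]
  exact ⟨copyChannel v, isQuantumChannel_copyChannel hv,
    ptraceThird_idTensor_copyChannel_sum_kronecker hv _,
    ptraceSecond_idTensor_copyChannel_sum_kronecker hv _⟩

theorem Broadcasts.commute_block [Finite α] (hΓ : Broadcasts Γ ρ) (hρ : ρ.PosSemidef)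
    (a a' c c' : α) : Commute (block ρ a a') (block ρ c c') := by
  classical
  cases nonempty_fintype α
  obtain ⟨⟨hcp, htrace⟩, hthird, hsecond⟩ := hΓ
  obtain ⟨K, rfl⟩ := exists_eq_krausMap hcp
  have hfix₁ (a a' : α) : IsMarginalFixed K kroneckerOne (block ρ a a') :=
    isMarginalFixed_kroneckerOne_iff.mpr (ptraceThird_eq_iff_block.mp hthird a a')
  have hfix₂ (a a' : α) : IsMarginalFixed K oneKronecker (block ρ a a') :=
    isMarginalFixed_oneKronecker_iff.mpr (ptraceSecond_eq_iff_block.mp hsecond a a')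
  have hσ₁ : IsMarginalFixed K kroneckerOne (traceLeft ρ) :=
    isMarginalFixed_kroneckerOne_iff.mpr (by
      simp only [traceLeft_eq_sum_block, map_sum, isMarginalFixed_kroneckerOne_iff.mp (hfix₁ _ _)])
  have hσ₂ : IsMarginalFixed K oneKronecker (traceLeft ρ) :=
    isMarginalFixed_oneKronecker_iff.mpr (by
      simp only [traceLeft_eq_sum_block ρ, map_sum,
        isMarginalFixed_oneKronecker_iff.mp (hfix₂ _ _)])
  have hsupport (a a' : α) (Q : Matrix β β ℂ) (hQ : traceLeft ρ * Q = 0) : block ρ a a' * Q = 0 :=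
    block_mul_eq_zero_of_traceLeft_mul_eq_zero hρ hQ a a'
  have hsupport' (a a' : α) (Q : Matrix β β ℂ) (hQ : traceLeft ρ * Q = 0) :
      (block ρ a a')ᴴ * Q = 0 := by
    rw [conjTranspose_block, hρ.isHermitian.eq]
    exact hsupport a' a Q hQ
  exact IsMarginalFixed.commute (sum_conjTranspose_mul_self_of_trace_preserving htrace)
    commute_kroneckerOne_oneKronecker (posSemidef_traceLeft hρ) hσ₁ hσ₂ (hfix₁ a a') (hfix₂ a a')
    (hfix₁ c c') (hfix₂ c c') (hsupport a a') (hsupport' a a') (hsupport c c') (hsupport' c c')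

theorem classicalOnB_of_commute_block [Fintype α] [DecidableEq β] (hρ : IsDensityMatrix ρ)
    (hcomm : ∀ a a' c c', Commute (block ρ a a') (block ρ c c')) : ClassicalOnB ρ := by
  obtain ⟨b, hb⟩ := exists_orthonormalBasis_mulVec_eq_smul
    (T := fun i : α × α => block ρ i.1 i.2) (fun i j => hcomm _ _ _ _) fun i j => by
      rw [conjTranspose_block, hρ.1.isHermitian.eq]
      exact hcomm _ _ _ _
  refine classicalOnB_of_eigenvectors (v := fun j => (b j).ofLp) hρ (fun j j' => ?_)
    fun a a' j => hb (a, a') j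
  rw [← orthonormal_iff_ite.mp b.orthonormal j j', EuclideanSpace.inner_eq_star_dotProduct,
    dotProduct_comm]

end Broadcasting

/-- **No-unilocal-broadcasting theorem.** A bipartite state `ρ_{AB}` can be locally
broadcast on `B` (there is a channel `Γ : B → B₁B₂` with both `ABᵢ` marginals of
`(id_A ⊗ Γ)[ρ_{AB}]` equal to `ρ_{AB}`) if and only if `ρ_{AB}` is classical on `B`. -/
theorem no_unilocal_broadcasting {α β : Type*} [Fintype α] [DecidableEq α]
    [Fintype β] [DecidableEq β]
    (ρ : Matrix (α × β) (α × β) ℂ) (hρ : IsDensityMatrix ρ) :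
    (∃ Γ : Matrix β β ℂ →ₗ[ℂ] Matrix (β × β) (β × β) ℂ, IsQuantumChannel Γ ∧
        ptraceThird (idTensor Γ ρ) = ρ ∧ ptraceSecond (idTensor Γ ρ) = ρ) ↔
      ClassicalOnB ρ :=
  ⟨fun ⟨_, hΓ⟩ => classicalOnB_of_commute_block hρ (Broadcasts.commute_block hΓ hρ.1),
    ClassicalOnB.exists_broadcasts⟩
end

section
/- Let ρ_{AB} be a bipartite density matrix, {E_i^A} a POVM on A with p_i = Tr((E_i^A ⊗ 1_B) ρ_{AB}) > 0 and conditional states ρ_i^B = (1/p_i) Tr_A((E_i^A ⊗ 1_B) ρ_{AB}). If a channel Γ: B → B₁B₂ locally broadcasts ρ_{AB} on B (i.e., both marginals Tr_{B2}((id_A ⊗ Γ)[ρ_{AB}]) and Tr_{B1}((id_A ⊗ Γ)[ρ_{AB}]) equal ρ_{AB}), then Γ broadcasts each conditional state: Tr_{B2}(Γ[ρ_i^B]) = ρ_i^B and Tr_{B1}(Γ[ρ_i^B]) = ρ_i^B for every i. -/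
open Matrix Kronecker ComplexOrder

/-!
An operation on `A` alone commutes with every operation on `B` alone. Hence conditioning on an
effect of `A` commutes both with `Γ` and with the partial traces over `B₁` and `B₂`, so each
marginal of `Γ` applied to a conditional state is the conditional state of the corresponding
marginal of `(id ⊗ Γ)[ρ]`, which is `ρ`.
-/

section Blocks
variable {l m n o p R : Type*} [Fintype m] [Fintype n] [DecidableEq n] [NonAssocSemiring R]

theorem kronecker_one_mul_apply (A : Matrix l m R) (M : Matrix (m × n) o R) (i : l) (j : n)
    (k : o) : ((A ⊗ₖ (1 : Matrix n n R)) * M) (i, j) k = ∑ a, A i a * M (a, j) k := by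
  simp [Matrix.mul_apply, Fintype.sum_prod_type, Matrix.one_apply]

theorem submatrix_kronecker_one_mul (A : Matrix l m R) (M : Matrix (m × n) o R) (i : l)
    (f : p → o) :
    ((A ⊗ₖ (1 : Matrix n n R)) * M).submatrix (Prod.mk i) f =
      ∑ a, A i a • M.submatrix (Prod.mk a) f := by
  ext j k
  simp [kronecker_one_mul_apply, Matrix.sum_apply]

end Blocks

section Locality
variable {α β β' γ : Type*}

theorem idTensor_apply (Λ : Matrix β β ℂ →ₗ[ℂ] Matrix β' β' ℂ)
    (M : Matrix (α × β) (α × β) ℂ) (p q : α × β') :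
    idTensor Λ M p q = Λ (M.submatrix (Prod.mk p.1) (Prod.mk q.1)) p.2 q.2 :=
  rfl

variable [Fintype α]

theorem ptraceLeft_eq_sum_submatrix (M : Matrix (α × β) (α × β) ℂ) :
    ptraceLeft M = ∑ a, M.submatrix (Prod.mk a) (Prod.mk a) := by
  ext b b'
  simp [ptraceLeft, Matrix.sum_apply]

theorem ptraceLeft_smul (c : ℂ) (M : Matrix (α × β) (α × β) ℂ) :
    ptraceLeft (c • M) = c • ptraceLeft M := by
  ext b b'
  simp [ptraceLeft, Finset.mul_sum]

theorem ptraceLeft_idTensor (Λ : Matrix β β ℂ →ₗ[ℂ] Matrix β' β' ℂ)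
    (M : Matrix (α × β) (α × β) ℂ) :
    ptraceLeft (idTensor Λ M) = Λ (ptraceLeft M) := by
  ext b b'
  simp [ptraceLeft_eq_sum_submatrix, idTensor_apply, Matrix.sum_apply]

theorem ptraceRight_ptraceLeft [Fintype γ] (M : Matrix (α × β × γ) (α × β × γ) ℂ) :
    ptraceRight (ptraceLeft M) = ptraceLeft (ptraceThird M) := by
  ext b b'
  exact Finset.sum_comm

theorem ptraceLeft_ptraceLeft [Fintype β] (M : Matrix (α × β × γ) (α × β × γ) ℂ) :
    ptraceLeft (ptraceLeft M) = ptraceLeft (ptraceSecond M) := by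
  ext c c'
  exact Finset.sum_comm

variable [Fintype β] [DecidableEq β]

theorem idTensor_kronecker_one_mul [Fintype β'] [DecidableEq β']
    (Λ : Matrix β β ℂ →ₗ[ℂ] Matrix β' β' ℂ) (E : Matrix α α ℂ)
    (M : Matrix (α × β) (α × β) ℂ) :
    idTensor Λ ((E ⊗ₖ (1 : Matrix β β ℂ)) * M) =
      (E ⊗ₖ (1 : Matrix β' β' ℂ)) * idTensor Λ M := by
  ext ⟨a, b⟩ q
  simp [idTensor_apply, submatrix_kronecker_one_mul, kronecker_one_mul_apply, Matrix.sum_apply]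

theorem ptraceThird_kronecker_one_mul [Fintype γ] [DecidableEq γ] (E : Matrix α α ℂ)
    (M : Matrix (α × β × γ) (α × β × γ) ℂ) :
    ptraceThird ((E ⊗ₖ (1 : Matrix (β × γ) (β × γ) ℂ)) * M) =
      (E ⊗ₖ (1 : Matrix β β ℂ)) * ptraceThird M := by
  ext ⟨a, b⟩ q
  simp only [ptraceThird, Matrix.of_apply, kronecker_one_mul_apply, Finset.mul_sum]
  exact Finset.sum_comm

theorem ptraceSecond_kronecker_one_mul [Fintype γ] [DecidableEq γ] (E : Matrix α α ℂ)
    (M : Matrix (α × β × γ) (α × β × γ) ℂ) :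
    ptraceSecond ((E ⊗ₖ (1 : Matrix (β × γ) (β × γ) ℂ)) * M) =
      (E ⊗ₖ (1 : Matrix γ γ ℂ)) * ptraceSecond M := by
  ext ⟨a, c⟩ q
  simp only [ptraceSecond, Matrix.of_apply, kronecker_one_mul_apply, Finset.mul_sum]
  exact Finset.sum_comm

theorem ptraceRight_map_ptraceLeft_kronecker_one_mul [Fintype β'] [Fintype γ] [DecidableEq β']
    (Γ : Matrix β β ℂ →ₗ[ℂ] Matrix (β' × γ) (β' × γ) ℂ) (E : Matrix α α ℂ)
    (ρ : Matrix (α × β) (α × β) ℂ) :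
    ptraceRight (Γ (ptraceLeft ((E ⊗ₖ (1 : Matrix β β ℂ)) * ρ))) =
      ptraceLeft ((E ⊗ₖ (1 : Matrix β' β' ℂ)) * ptraceThird (idTensor Γ ρ)) := by
  classical rw [← ptraceLeft_idTensor, ptraceRight_ptraceLeft, idTensor_kronecker_one_mul,
    ptraceThird_kronecker_one_mul]

theorem ptraceLeft_map_ptraceLeft_kronecker_one_mul [Fintype β'] [Fintype γ] [DecidableEq γ]
    (Γ : Matrix β β ℂ →ₗ[ℂ] Matrix (β' × γ) (β' × γ) ℂ) (E : Matrix α α ℂ)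
    (ρ : Matrix (α × β) (α × β) ℂ) :
    ptraceLeft (Γ (ptraceLeft ((E ⊗ₖ (1 : Matrix β β ℂ)) * ρ))) =
      ptraceLeft ((E ⊗ₖ (1 : Matrix γ γ ℂ)) * ptraceSecond (idTensor Γ ρ)) := by
  classical rw [← ptraceLeft_idTensor, ptraceLeft_ptraceLeft, idTensor_kronecker_one_mul,
    ptraceSecond_kronecker_one_mul]

theorem broadcasts_conditional_states_general (ρ : Matrix (α × β) (α × β) ℂ)
    (E : Matrix α α ℂ) (Γ : Matrix β β ℂ →ₗ[ℂ] Matrix (β × β) (β × β) ℂ)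
    (hb₁ : ptraceThird (idTensor Γ ρ) = ρ) (hb₂ : ptraceSecond (idTensor Γ ρ) = ρ) :
    ptraceRight (Γ (ptraceLeft ((E ⊗ₖ (1 : Matrix β β ℂ)) * ρ))) =
        ptraceLeft ((E ⊗ₖ (1 : Matrix β β ℂ)) * ρ) ∧
      ptraceLeft (Γ (ptraceLeft ((E ⊗ₖ (1 : Matrix β β ℂ)) * ρ))) =
        ptraceLeft ((E ⊗ₖ (1 : Matrix β β ℂ)) * ρ) := by
  rw [ptraceRight_map_ptraceLeft_kronecker_one_mul, hb₁,
    ptraceLeft_map_ptraceLeft_kronecker_one_mul, hb₂]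
  exact ⟨rfl, rfl⟩

end Locality

/-- If a channel `Γ : B → B₁B₂` locally broadcasts `ρ_{AB}` on `B`, then it broadcasts
every conditional state `ρᵢ^B = pᵢ⁻¹ Tr_A((Eᵢ ⊗ 𝟙)ρ_{AB})` induced by a POVM `{Eᵢ}` on `A`
with `pᵢ = Tr((Eᵢ ⊗ 𝟙)ρ_{AB}) > 0`. -/
theorem broadcasts_conditional_states {α β : Type*} [Fintype α] [DecidableEq α]
    [Fintype β] [DecidableEq β]
    (ρ : Matrix (α × β) (α × β) ℂ) (hρ : IsDensityMatrix ρ)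
    {k : ℕ} (E : Fin k → Matrix α α ℂ)
    (hE : ∀ i, (E i).PosSemidef) (hEsum : ∑ i, E i = 1)
    (hp : ∀ i, 0 < ((E i ⊗ₖ (1 : Matrix β β ℂ)) * ρ).trace)
    (Γ : Matrix β β ℂ →ₗ[ℂ] Matrix (β × β) (β × β) ℂ) (hΓ : IsQuantumChannel Γ)
    (hb₁ : ptraceThird (idTensor Γ ρ) = ρ) (hb₂ : ptraceSecond (idTensor Γ ρ) = ρ) :
    ∀ i,
      ptraceRight (Γ ((((E i ⊗ₖ (1 : Matrix β β ℂ)) * ρ).trace)⁻¹ •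
          ptraceLeft ((E i ⊗ₖ (1 : Matrix β β ℂ)) * ρ))) =
        (((E i ⊗ₖ (1 : Matrix β β ℂ)) * ρ).trace)⁻¹ •
          ptraceLeft ((E i ⊗ₖ (1 : Matrix β β ℂ)) * ρ) ∧
      ptraceLeft (Γ ((((E i ⊗ₖ (1 : Matrix β β ℂ)) * ρ).trace)⁻¹ •
          ptraceLeft ((E i ⊗ₖ (1 : Matrix β β ℂ)) * ρ))) =
        (((E i ⊗ₖ (1 : Matrix β β ℂ)) * ρ).trace)⁻¹ •
          ptraceLeft ((E i ⊗ₖ (1 : Matrix β β ℂ)) * ρ) := by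
  intro i
  -- Unnormalised conditioning is linear in the effect, so `pᵢ⁻¹` is absorbed into `Eᵢ`.
  rw [← ptraceLeft_smul, ← Matrix.smul_mul, ← Matrix.smul_kronecker]
  exact broadcasts_conditional_states_general ρ _ Γ hb₁ hb₂
end
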